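/- arXiv:1603.08651 — 5 statements merged into one kernel-verified Lean document; each statement's English description precedes it below -/
import Mathlib

section
/- Let n ≥ 3 and let C ⊆ ℝ^n be a nonempty compact convex set that is universally parkable. Then C has a center of symmetry, i.e. there exists a point p ∈ ℝ^n with C = 2p - C. -/
/-!
Any translate `C - a` lies in its closed absolutely convex hull `B`. Parking it there yields `c ∈ C`
with `C - c ⊆ B`, and comparing the values of a functional `f` on both sides shows that the midpoint
of the interval `f '' C` is at most `(f a + f c) / 2` whenever `f c < f a`. For `a ∉ C` we have
`c ≠ a`, so by continuity this midpoint is exactly `f a` for every `f` vanishing on `a - c`.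

Now let `a` go to infinity in a direction `d`. As `c` stays in the compact set `C`, the direction
of `a - c` tends to `d`, so the midpoint is a linear function of `f` on the annihilator of `d`.
In dimension at least three any two functionals have a common zero `d ≠ 0`, so the midpoint is
linear in `f`; since it is evaluation at `a` on the annihilator of `a - c`, it is evaluation
at some point `p` of the line through `a` and `c`. By Hahn–Banach, `p` is a center of symmetry.
-/

open Filter Set Topology

/-- A set is universally parkable if each of its translates that lies in a symmetric compact
convex set `B` can be translated, within `B`, to a set containing the origin. -/
def IsUniversallyParkable {E : Type*} [AddCommGroup E] [Module ℝ E] [TopologicalSpace E]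
    (C : Set E) : Prop :=
  ∀ B : Set E, IsCompact B → Convex ℝ B → B = -B → ∀ u : E, (fun x => x + u) '' C ⊆ B →
    ∃ v : E, (0 : E) ∈ (fun x => x + u + v) '' C ∧ (fun x => x + u + v) '' C ⊆ B

/-- The midpoint of the range of the functional `f` on `C`, that is, the odd part of the
support function of `C`. It is meaningful only if `C` is nonempty and `f` is bounded on `C`. -/
noncomputable def midrange {E : Type*} [AddCommGroup E] [Module ℝ E] [TopologicalSpace E]
    (C : Set E) (f : StrongDual ℝ E) : ℝ :=
  (sSup (f '' C) + sInf (f '' C)) / 2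

theorem exists_ne_zero_dual_apply_eq_zero {K V : Type*} [Field K] [AddCommGroup V] [Module K V]
    (hV : 2 < Module.rank K V) (f g : Module.Dual K V) : ∃ d : V, d ≠ 0 ∧ f d = 0 ∧ g d = 0 := by
  have hker : LinearMap.ker (f.prod g) ≠ ⊥ := fun h => by
    have hrank := LinearMap.lift_rank_le_of_injective _ (LinearMap.ker_eq_bot.1 h)
    rw [rank_prod', Module.rank_self, one_add_one_eq_two, Cardinal.lift_ofNat,
      Cardinal.lift_le_ofNat_iff] at hrank
    exact hrank.not_gt hV
  obtain ⟨d, hd, hd0⟩ := Submodule.exists_mem_ne_zero_of_ne_bot hker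
  exact ⟨d, hd0, by simpa using hd⟩

section TopologicalVectorSpace

variable {E : Type*} [AddCommGroup E] [Module ℝ E] [TopologicalSpace E] {C : Set E}

theorem IsUniversallyParkable.exists_forall_sub_mem (hC : IsUniversallyParkable C) {B : Set E}
    (hBcompact : IsCompact B) (hBconvex : Convex ℝ B) (hBsymm : B = -B) {a : E}
    (ha : ∀ x ∈ C, x - a ∈ B) : ∃ c ∈ C, ∀ x ∈ C, x - c ∈ B := by
  obtain ⟨v, ⟨c, hc, hv⟩, hvB⟩ := hC B hBcompact hBconvex hBsymm (-a)
    (image_subset_iff.2 fun x hx => by simpa [← sub_eq_add_neg] using ha x hx)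
  obtain rfl : v = a - c := by
    change c + -a + v = 0 at hv
    rw [← sub_eq_zero, ← hv]
    abel
  refine ⟨c, hc, fun x hx => ?_⟩
  have : x + -a + (a - c) = x - c := by abel
  exact this ▸ hvB (mem_image_of_mem _ hx)

theorem abs_apply_le_of_mem_closedAbsConvexHull {s : Set E} {f : StrongDual ℝ E} {r : ℝ}
    (hs : ∀ x ∈ s, |f x| ≤ r) {y : E} (hy : y ∈ closedAbsConvexHull ℝ s) : |f y| ≤ r := by
  have hball : AbsConvex ℝ (f ⁻¹' Metric.closedBall 0 r) :=
    ⟨balanced_closedBall_zero.mulActionHom_preimage f.toLinearMap.toMulActionHom,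
      (convex_closedBall 0 r).linear_preimage f.toLinearMap⟩
  have hsub : s ⊆ f ⁻¹' Metric.closedBall 0 r := fun x hx => mem_closedBall_zero_iff.2 (hs x hx)
  exact mem_closedBall_zero_iff.1 <|
    closedAbsConvexHull_min hsub hball (Metric.isClosed_closedBall.preimage f.continuous) hy

theorem midrange_neg (f : StrongDual ℝ E) : midrange C (-f) = -midrange C f := by
  have himage : ⇑(-f) '' C = -(f '' C) := by
    rw [← image_neg_eq_neg, image_image]
    rfl
  rw [midrange, midrange, himage, Real.sSup_neg, Real.sInf_neg]
  ring

theorem continuous_midrange {X : Type*} [TopologicalSpace X] (hC : IsCompact C)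
    {F : X → StrongDual ℝ E} (hF : Continuous fun q : X × E => F q.1 q.2) :
    Continuous fun x => midrange C (F x) :=
  ((hC.continuous_sSup hF).add (hC.continuous_sInf hF)).div_const 2

section Asymptotics

variable {c : ℝ → E} {d : E} {φ : StrongDual ℝ E}

theorem eventually_smul_notMem (hC : IsCompact C) (hφd : φ d = 1) :
    ∀ᶠ t : ℝ in atTop, t • d ∉ C := by
  obtain ⟨M, hM⟩ := hC.bddAbove_image φ.continuous.continuousOn
  filter_upwards [eventually_gt_atTop M] with t ht htC
  have := hM (mem_image_of_mem φ htC)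
  rw [map_smul, hφd, smul_eq_mul, mul_one] at this
  exact this.not_gt ht

theorem tendsto_apply_smul_sub_atTop (hC : IsCompact C) (hc : ∀ᶠ t in atTop, c t ∈ C)
    (hφd : φ d = 1) : Tendsto (fun t => φ (t • d - c t)) atTop atTop := by
  obtain ⟨M, hM⟩ := hC.bddAbove_image φ.continuous.continuousOn
  refine tendsto_atTop_mono' _ ?_ (tendsto_atTop_add_const_right _ (-M) tendsto_id)
  filter_upwards [hc] with t ht
  have := hM (mem_image_of_mem φ ht)
  simp only [id, map_sub, map_smul, hφd, smul_eq_mul, mul_one]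
  linarith

theorem tendsto_apply_div_apply_smul_sub (hC : IsCompact C) (hc : ∀ᶠ t in atTop, c t ∈ C)
    (hφd : φ d = 1) {f : StrongDual ℝ E} (hfd : f d = 0) :
    Tendsto (fun t => f (t • d - c t) / φ (t • d - c t)) atTop (𝓝 0) := by
  obtain ⟨M, hM⟩ := hC.bddAbove_image f.continuous.continuousOn
  obtain ⟨m, hm⟩ := hC.bddBelow_image f.continuous.continuousOn
  have hval (t : ℝ) : f (t • d - c t) = -f (c t) := by simp [hfd]
  refine tendsto_bdd_div_atTop_nhds_zero (b := -M) (B := -m) ?_ ?_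
    (tendsto_apply_smul_sub_atTop hC hc hφd)
  · filter_upwards [hc] with t ht
    exact hval t ▸ neg_le_neg (hM (mem_image_of_mem f ht))
  · filter_upwards [hc] with t ht
    exact hval t ▸ neg_le_neg (hm (mem_image_of_mem f ht))

end Asymptotics

theorem two_smul_sub_mem_of_midrange_eq [IsTopologicalAddGroup E] [ContinuousSMul ℝ E]
    [LocallyConvexSpace ℝ E] [T2Space E] (hCcompact : IsCompact C) (hCconvex : Convex ℝ C)
    {p : E} (hp : ∀ f, midrange C f = f p) {c : E} (hc : c ∈ C) : (2 : ℝ) • p - c ∈ C := by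
  by_contra hnot
  obtain ⟨f, u, hfC, hfu⟩ := geometric_hahn_banach_closed_point hCconvex hCcompact.isClosed hnot
  have hsup : sSup (f '' C) ≤ u :=
    csSup_le (nonempty_of_mem hc |>.image f) (forall_mem_image.2 fun x hx => (hfC x hx).le)
  have hinf : sInf (f '' C) ≤ f c :=
    csInf_le (hCcompact.bddBelow_image f.continuous.continuousOn) (mem_image_of_mem f hc)
  have hmid : sSup (f '' C) + sInf (f '' C) = 2 * f p := by rw [← hp, midrange]; ring
  rw [map_sub, map_smul, smul_eq_mul] at hfu
  linarith

end TopologicalVectorSpace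

section LocallyConvexSpace

variable {E : Type*} [AddCommGroup E] [Module ℝ E] [UniformSpace E] [IsUniformAddGroup E]
  [ContinuousSMul ℝ E] [LocallyConvexSpace ℝ E] [QuasiCompleteSpace ℝ E] {C : Set E}

namespace IsUniversallyParkable

theorem exists_midrange_le (hC : IsUniversallyParkable C) (hCcompact : IsCompact C) (a : E) :
    ∃ c ∈ C, ∀ f : StrongDual ℝ E, f c < f a → midrange C f ≤ (f a + f c) / 2 := by
  have hcompact : IsCompact (closedAbsConvexHull ℝ ((· - a) '' C)) :=
    isCompact_closedAbsConvexHull_of_totallyBounded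
      (hCcompact.image (continuous_sub_right a)).totallyBounded
  obtain ⟨c, hc, hsub⟩ := hC.exists_forall_sub_mem hcompact absConvex_convexClosedHull.2
    absConvex_convexClosedHull.1.neg_eq.symm
    fun x hx => subset_closedAbsConvexHull (mem_image_of_mem (· - a) hx)
  refine ⟨c, hc, fun f hfca => ?_⟩
  have hcont : ContinuousOn f C := f.continuous.continuousOn
  have habs : ∀ y ∈ (· - a) '' C, |f y| ≤ max (sSup (f '' C) - f a) (f a - sInf (f '' C)) := by
    rintro _ ⟨x, hx, rfl⟩
    have hsup := le_csSup (hCcompact.bddAbove_image hcont) (mem_image_of_mem f hx)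
    have hinf := csInf_le (hCcompact.bddBelow_image hcont) (mem_image_of_mem f hx)
    rw [map_sub]
    exact abs_le'.2 ⟨le_max_of_le_left (by linarith), le_max_of_le_right (by linarith)⟩
  have hsup : sSup (f '' C) ≤ max (sSup (f '' C) - f a) (f a - sInf (f '' C)) + f c :=
    csSup_le (nonempty_of_mem hc |>.image f) <| forall_mem_image.2 fun x hx => by
      have := le_of_abs_le (abs_apply_le_of_mem_closedAbsConvexHull habs (hsub x hx))
      rw [map_sub] at this
      linarith
  rw [midrange]
  rcases le_max_iff.1 (sub_le_iff_le_add.2 hsup) with h | h <;> linarith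

variable [T2Space E]

theorem exists_midrange_eq (hC : IsUniversallyParkable C) (hCcompact : IsCompact C) {a : E}
    (ha : a ∉ C) : ∃ c ∈ C, ∀ f : StrongDual ℝ E, f (a - c) = 0 → midrange C f = f a := by
  obtain ⟨c, hc, hmid⟩ := hC.exists_midrange_le hCcompact a
  obtain ⟨φ, hφ⟩ := SeparatingDual.exists_eq_one (R := ℝ)
    (sub_ne_zero.2 (ne_of_mem_of_not_mem hc ha).symm)
  have hle (f : StrongDual ℝ E) (hf : f (a - c) = 0) : midrange C f ≤ f a := by
    have hfca : f a = f c := by rwa [map_sub, sub_eq_zero] at hf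
    have hcont : Continuous fun ε : ℝ => midrange C (f + ε • φ) :=
      continuous_midrange hCcompact (by simp only [add_apply, smul_apply]; fun_prop)
    have hleft : Tendsto (fun ε : ℝ => midrange C (f + ε • φ)) (𝓝[>] 0) (𝓝 (midrange C f)) :=
      (hcont.tendsto' 0 _ (by simp)).mono_left nhdsWithin_le_nhds
    have hright : Tendsto (fun ε : ℝ => ((f + ε • φ) a + (f + ε • φ) c) / 2) (𝓝[>] 0) (𝓝 (f a)) :=
      (Continuous.tendsto' (by simp only [add_apply, smul_apply]; fun_prop) 0 _
        (by simp [hfca])).mono_left nhdsWithin_le_nhds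
    refine le_of_tendsto_of_tendsto hleft hright ?_
    filter_upwards [self_mem_nhdsWithin] with ε (hε : 0 < ε)
    refine hmid _ (sub_pos.1 ?_)
    rw [← map_sub, add_apply, smul_apply, hf, hφ, smul_eq_mul, zero_add, mul_one]
    exact hε
  refine ⟨c, hc, fun f hf => (hle f hf).antisymm ?_⟩
  have := hle (-f) (by rw [neg_apply, hf, neg_zero])
  rw [midrange_neg, neg_apply] at this
  exact neg_le_neg_iff.1 this

theorem midrange_smul_add (hC : IsUniversallyParkable C) (hCcompact : IsCompact C)
    (hE : 2 < Module.rank ℝ E) (r : ℝ) (f g : StrongDual ℝ E) :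
    midrange C (r • f + g) = r * midrange C f + midrange C g := by
  obtain ⟨d, hd, hfd, hgd⟩ := exists_ne_zero_dual_apply_eq_zero hE f.toLinearMap g.toLinearMap
  obtain ⟨φ, hφd⟩ := SeparatingDual.exists_eq_one (R := ℝ) hd
  choose! center hcenter hmid using fun a (ha : a ∉ C) => hC.exists_midrange_eq hCcompact ha
  have houtside : ∀ᶠ t : ℝ in atTop, t • d ∉ C := eventually_smul_notMem hCcompact hφd
  have hinside : ∀ᶠ t : ℝ in atTop, center (t • d) ∈ C := houtside.mono fun t => hcenter _
  let v (t : ℝ) : E := t • d - center (t • d)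
  let s (k : StrongDual ℝ E) (t : ℝ) : ℝ := k (v t) / φ (v t)
  have hs {k : StrongDual ℝ E} (hk : k d = 0) : Tendsto (s k) atTop (𝓝 0) :=
    tendsto_apply_div_apply_smul_sub hCcompact hinside hφd hk
  -- Subtracting `s k t • φ` makes `k` vanish on `v t`, where the midrange is an evaluation.
  have heq : ∀ᶠ t in atTop, midrange C (r • (f - s f t • φ) + (g - s g t • φ)) =
      r * midrange C (f - s f t • φ) + midrange C (g - s g t • φ) := by
    filter_upwards [houtside,
      (tendsto_apply_smul_sub_atTop hCcompact hinside hφd).eventually_ne_atTop 0] with t ht hφv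
    have hvanish (k : StrongDual ℝ E) : (k - s k t • φ) (v t) = 0 := by
      rw [sub_apply, smul_apply, smul_eq_mul, div_mul_cancel₀ _ hφv, sub_self]
    rw [hmid _ ht _ (hvanish f), hmid _ ht _ (hvanish g), hmid _ ht]
    · rfl
    · rw [add_apply, smul_apply, hvanish, hvanish, smul_zero, add_zero]
  have hcont : Continuous fun q : ℝ × ℝ => midrange C (r • (f - q.1 • φ) + (g - q.2 • φ)) :=
    continuous_midrange hCcompact (by simp only [add_apply, sub_apply, smul_apply]; fun_prop)
  have hcont_sub (k : StrongDual ℝ E) : Continuous fun q : ℝ => midrange C (k - q • φ) :=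
    continuous_midrange hCcompact (by simp only [sub_apply, smul_apply]; fun_prop)
  have hlim {k : StrongDual ℝ E} (hk : k d = 0) :
      Tendsto (fun t => midrange C (k - s k t • φ)) atTop (𝓝 (midrange C k)) :=
    ((hcont_sub k).tendsto' 0 _ (by simp)).comp (hs hk)
  exact tendsto_nhds_unique_of_eventuallyEq
    ((hcont.tendsto' (0, 0) _ (by simp)).comp ((hs hfd).prodMk_nhds (hs hgd)))
    (((hlim hfd).const_mul r).add (hlim hgd)) heq

theorem exists_midrange_eq_apply (hC : IsUniversallyParkable C) (hCcompact : IsCompact C)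
    (hE : 2 < Module.rank ℝ E) : ∃ p : E, ∀ f, midrange C f = f p := by
  obtain ⟨d, hd, -⟩ := exists_ne_zero_dual_apply_eq_zero hE 0 0
  obtain ⟨ψ, hψd⟩ := SeparatingDual.exists_eq_one (R := ℝ) hd
  obtain ⟨t, ht⟩ := (eventually_smul_notMem hCcompact hψd).exists
  obtain ⟨c, hc, hmid⟩ := hC.exists_midrange_eq hCcompact ht
  generalize t • d = a at ht hmid
  obtain ⟨φ, hφ⟩ := SeparatingDual.exists_eq_one (R := ℝ)
    (sub_ne_zero.2 (ne_of_mem_of_not_mem hc ht).symm)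
  refine ⟨a + (midrange C φ - φ a) • (a - c), fun f => ?_⟩
  have hvanish : (f - f (a - c) • φ) (a - c) = 0 := by
    rw [sub_apply, smul_apply, hφ, smul_eq_mul, mul_one, sub_self]
  calc midrange C f
      = midrange C (f (a - c) • φ + (f - f (a - c) • φ)) := by rw [add_sub_cancel]
    _ = f (a - c) * midrange C φ + (f - f (a - c) • φ) a := by
      rw [hC.midrange_smul_add hCcompact hE, hmid _ hvanish]
    _ = f (a + (midrange C φ - φ a) • (a - c)) := by
      simp only [sub_apply, smul_apply, map_add, map_smul, smul_eq_mul]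
      ring

end IsUniversallyParkable

theorem stmt_0_general [T2Space E] (hE : 2 < Module.rank ℝ E) (hCcompact : IsCompact C)
    (hCconvex : Convex ℝ C) (hC : IsUniversallyParkable C) :
    ∃ p : E, C = (fun x => (2 : ℝ) • p - x) '' C := by
  obtain ⟨p, hp⟩ := hC.exists_midrange_eq_apply hCcompact hE
  have hmem : MapsTo (fun x => (2 : ℝ) • p - x) C C := fun c hc =>
    two_smul_sub_mem_of_midrange_eq hCcompact hCconvex hp hc
  exact ⟨p, Subset.antisymm (fun c hc => ⟨_, hmem hc, sub_sub_cancel _ c⟩) hmem.image_subset⟩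

end LocallyConvexSpace

/-- A nonempty compact convex universally parkable set in ℝⁿ (n ≥ 3) has a
center of symmetry. -/
theorem stmt_0 (n : ℕ) (hn : 3 ≤ n) (C : Set (EuclideanSpace ℝ (Fin n)))
    (hCne : C.Nonempty) (hCcomp : IsCompact C) (hCconv : Convex ℝ C)
    (hup : ∀ B : Set (EuclideanSpace ℝ (Fin n)),
      IsCompact B → Convex ℝ B → B = -B →
      ∀ u : EuclideanSpace ℝ (Fin n), (fun x => x + u) '' C ⊆ B →
        ∃ v : EuclideanSpace ℝ (Fin n),
          (0 : EuclideanSpace ℝ (Fin n)) ∈ (fun x => x + u + v) '' C ∧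
          (fun x => x + u + v) '' C ⊆ B) :
    ∃ p : EuclideanSpace ℝ (Fin n), C = (fun x => (2 : ℝ) • p - x) '' C := by
  refine stmt_0_general ?_ hCcomp hCconv hup
  rw [← Module.finrank_eq_rank, finrank_euclideanSpace_fin]
  exact_mod_cast hn
end

section
/- Let C ⊆ ℝ³ be a nonempty compact convex universally parkable set and let u ∈ ℝ³ be a vector with 0 ∉ C + u. If v and v' are nonzero vectors such that 0 ∈ C + u + v ⊆ conv((-(C + u)) ∪ (C + u)) and 0 ∈ C + u + v' ⊆ conv((-(C + u)) ∪ (C + u)), then v and v' have the same direction, i.e. ‖v'‖ • v = ‖v‖ • v'. -/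
/-!
Write `K = C + u` and let `f` be a linear functional with `f v > 0`. Its supremum over the translate
`K + v` exceeds its supremum over `K`, so `K + v ⊆ conv (-K ∪ K)` forces `sup_K f < sup_{-K} f`. If
moreover `f v' < 0`, the same argument for `-K` and `-v'` gives the opposite inequality. Hence no
continuous functional is positive at `v` and negative at `v'`, and Hahn–Banach separation of `0`
from the segment `[v, -v']` puts the two vectors on a common ray.
-/

lemma neg_translate_subset_convexHull_neg {R E : Type*} [Ring R] [PartialOrder R]
    [AddCommGroup E] [Module R E] {K L : Set E} {v : E} (hsub : (· + v) '' K ⊆ convexHull R L) :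
    (· + -v) '' (-K) ⊆ convexHull R (-L) := by
  rw [convexHull_neg,
    Set.image_neg_of_apply_neg_eq_neg (g := (· + v)) fun x _ ↦ (neg_add x v).symm]
  exact Set.neg_subset_neg.2 hsub

section LinearFunctional

variable {E : Type*} [AddCommGroup E] [Module ℝ E] (f : E →ₗ[ℝ] ℝ) {K L : Set E} {v v' : E}

lemma apply_le_max_sSup_of_mem_convexHull_union (hK : BddAbove (f '' K)) (hL : BddAbove (f '' L))
    {x : E} (hx : x ∈ convexHull ℝ (L ∪ K)) : f x ≤ max (sSup (f '' K)) (sSup (f '' L)) := by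
  refine convexHull_min ?_ (convex_halfSpace_le f.isLinear _) hx
  rintro y (hy | hy)
  · exact le_max_of_le_right (le_csSup hL (Set.mem_image_of_mem f hy))
  · exact le_max_of_le_left (le_csSup hK (Set.mem_image_of_mem f hy))

lemma sSup_image_lt_sSup_image_of_translate_subset_convexHull_union (hne : K.Nonempty)
    (hK : BddAbove (f '' K)) (hL : BddAbove (f '' L))
    (hsub : (· + v) '' K ⊆ convexHull ℝ (L ∪ K)) (hv : 0 < f v) :
    sSup (f '' K) < sSup (f '' L) := by
  have hle : sSup (f '' K) ≤ max (sSup (f '' K)) (sSup (f '' L)) - f v := by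
    refine csSup_le (hne.image f) (Set.forall_mem_image.2 fun x hx ↦ le_sub_iff_add_le.2 ?_)
    rw [← map_add]
    exact apply_le_max_sSup_of_mem_convexHull_union f hK hL (hsub (Set.mem_image_of_mem _ hx))
  have hlt : sSup (f '' K) < max (sSup (f '' K)) (sSup (f '' L)) :=
    hle.trans_lt (sub_lt_self _ hv)
  exact (lt_max_iff.1 hlt).resolve_left (lt_irrefl _)

lemma apply_nonneg_of_translates_subset_convexHull_neg_union (hne : K.Nonempty)
    (hK : BddAbove (f '' K)) (hnegK : BddAbove (f '' (-K)))
    (hsub : (· + v) '' K ⊆ convexHull ℝ (-K ∪ K))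
    (hsub' : (· + v') '' K ⊆ convexHull ℝ (-K ∪ K)) (hv : 0 < f v) : 0 ≤ f v' := by
  by_contra! hv'
  have hlt : sSup (f '' K) < sSup (f '' (-K)) :=
    sSup_image_lt_sSup_image_of_translate_subset_convexHull_union f hne hK hnegK hsub hv
  have hneg : (· + -v') '' (-K) ⊆ convexHull ℝ (K ∪ -K) := by
    simpa only [Set.union_neg, neg_neg] using neg_translate_subset_convexHull_neg hsub'
  have hgt : sSup (f '' (-K)) < sSup (f '' K) :=
    sSup_image_lt_sSup_image_of_translate_subset_convexHull_union f hne.neg hnegK hK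
      hneg (by simpa only [map_neg, neg_pos] using hv')
  exact lt_asymm hlt hgt

end LinearFunctional

section LocallyConvex

variable {E : Type*} [AddCommGroup E] [Module ℝ E] [TopologicalSpace E]

lemma bddAbove_image_of_isVonNBounded {K : Set E} (hK : Bornology.IsVonNBounded ℝ K)
    (f : StrongDual ℝ E) : BddAbove (f '' K) :=
  ((NormedSpace.isVonNBounded_iff ℝ).1 (hK.image f)).bddAbove

variable [IsTopologicalAddGroup E] [ContinuousSMul ℝ E]

lemma exists_strongDual_pos_neg_of_not_sameRay [LocallyConvexSpace ℝ E] [T2Space E] {v v' : E}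
    (h : ¬SameRay ℝ v v') : ∃ f : StrongDual ℝ E, 0 < f v ∧ f v' < 0 := by
  have hzero : (0 : E) ∉ segment ℝ v (-v') := fun hmem ↦
    h (by simpa only [zero_sub, sub_zero, sameRay_neg_iff] using sameRay_of_mem_segment hmem)
  have hclosed : IsClosed (segment ℝ v (-v')) := by
    rw [← convexHull_pair]
    exact (Set.toFinite _).isClosed_convexHull ℝ
  obtain ⟨f, c, hc, hf⟩ :=
    geometric_hahn_banach_point_closed (convex_segment v (-v')) hclosed hzero
  rw [map_zero] at hc
  refine ⟨f, hc.trans (hf v (left_mem_segment ℝ v _)), ?_⟩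
  simpa only [map_neg, neg_pos] using hc.trans (hf (-v') (right_mem_segment ℝ v _))

theorem stmt_4_general [LocallyConvexSpace ℝ E] [T2Space E] {K : Set E} {v v' : E}
    (hne : K.Nonempty) (hK : Bornology.IsVonNBounded ℝ K)
    (hsub : (· + v) '' K ⊆ convexHull ℝ (-K ∪ K))
    (hsub' : (· + v') '' K ⊆ convexHull ℝ (-K ∪ K)) : SameRay ℝ v v' := by
  by_contra hray
  obtain ⟨f, hv, hv'⟩ := exists_strongDual_pos_neg_of_not_sameRay hray
  exact hv'.not_ge <| apply_nonneg_of_translates_subset_convexHull_neg_union f.toLinearMap hne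
    (bddAbove_image_of_isVonNBounded hK f) (bddAbove_image_of_isVonNBounded hK.neg f) hsub hsub' hv

end LocallyConvex

/-- Uniqueness of the parking direction: if `C ⊆ ℝ³` is nonempty, compact,
convex and universally parkable, `0 ∉ C + u`, and nonzero vectors `v, v'` both
park `C + u` inside `conv((-(C+u)) ∪ (C+u))`, then `v` and `v'` have the same
direction. -/
theorem stmt_4 (C : Set (EuclideanSpace ℝ (Fin 3)))
    (hCne : C.Nonempty) (hCcomp : IsCompact C) (hCconv : Convex ℝ C)
    (hup : ∀ B : Set (EuclideanSpace ℝ (Fin 3)),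
      IsCompact B → Convex ℝ B → B = -B →
      ∀ u : EuclideanSpace ℝ (Fin 3), (fun x => x + u) '' C ⊆ B →
        ∃ v : EuclideanSpace ℝ (Fin 3),
          (0 : EuclideanSpace ℝ (Fin 3)) ∈ (fun x => x + u + v) '' C ∧
          (fun x => x + u + v) '' C ⊆ B)
    (u : EuclideanSpace ℝ (Fin 3))
    (h0 : (0 : EuclideanSpace ℝ (Fin 3)) ∉ (fun x => x + u) '' C)
    (v v' : EuclideanSpace ℝ (Fin 3)) (hv : v ≠ 0) (hv' : v' ≠ 0)
    (hpark : (0 : EuclideanSpace ℝ (Fin 3)) ∈ (fun x => x + u + v) '' C ∧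
      (fun x => x + u + v) '' C ⊆
        convexHull ℝ ((-((fun x => x + u) '' C)) ∪ ((fun x => x + u) '' C)))
    (hpark' : (0 : EuclideanSpace ℝ (Fin 3)) ∈ (fun x => x + u + v') '' C ∧
      (fun x => x + u + v') '' C ⊆
        convexHull ℝ ((-((fun x => x + u) '' C)) ∪ ((fun x => x + u) '' C))) :
    ‖v'‖ • v = ‖v‖ • v' := by
  have hbdd : Bornology.IsVonNBounded ℝ ((fun x => x + u) '' C) :=
    (hCcomp.image (continuous_add_const u)).isVonNBounded ℝ
  exact (stmt_4_general (hCne.image _) hbdd ((Set.image_image _ _ C).trans_subset hpark'.2)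
    ((Set.image_image _ _ C).trans_subset hpark.2)).norm_smul_eq
end

section
/- Let B ⊆ ℝ² be a convex body such that every nonempty intersection of B with an affine line is parkable in B (that is, for every affine line ℓ with ℓ ∩ B nonempty there is a vector w with 0 ∈ (ℓ ∩ B) + w ⊆ B). Then B is centrally symmetric: B = -B. -/
/-!
Let `p` be the gauge of `B` and `q x = p (-x)`. A chord in direction `x` parked in `B` fits into the
diameter of `B` along `x`, so that diameter is a longest chord in its direction and its endpoints
`x / p x` and `-x / q x` admit parallel supporting hyperplanes. Normalised by `l x = 1`, their
common functional `l` satisfies `p x * l ≤ p` and `q x * l ≤ q`; thus `log p` and `log q` have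
a common subgradient at every `x ≠ 0`. Hence `p / q` is constant along every line missing the
origin, so on the whole punctured space, and as `x ↦ -x` inverts `p / q`, this constant is `1`.
-/

open Set Filter Topology Function

section Subgradient

variable {f g k m : ℝ → ℝ}

theorem monotone_of_subgradient (hk : ∀ s t, f s + k s * (t - s) ≤ f t) : Monotone k := by
  intro s t hst
  rcases hst.eq_or_lt with rfl | hlt
  · rfl
  · have := hk s t
    have := hk t s
    exact le_of_mul_le_mul_right (a := t - s) (by linarith) (sub_pos.2 hlt)

theorem hasDerivWithinAt_Ici_rightLim_of_subgradient (hf : Continuous f)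
    (hk : ∀ s t, f s + k s * (t - s) ≤ f t) (t : ℝ) :
    HasDerivWithinAt f (rightLim k t) (Ici t) t := by
  have hmono := monotone_of_subgradient hk
  have hlim : Tendsto k (𝓝[>] t) (𝓝 (rightLim k t)) := hmono.tendsto_rightLim t
  have rightLim_subgradient (s : ℝ) : f t + rightLim k t * (s - t) ≤ f s := by
    have hf_lim : Tendsto f (𝓝[>] t) (𝓝 (f t)) := hf.continuousWithinAt
    have hid : Tendsto (fun u : ℝ => u) (𝓝[>] t) (𝓝 t) := nhdsWithin_le_nhds
    exact le_of_tendsto' (hf_lim.add (hlim.mul (tendsto_const_nhds.sub hid))) fun u => hk u s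
  rw [← hasDerivWithinAt_Ioi_iff_Ici, hasDerivWithinAt_iff_tendsto_slope' self_notMem_Ioi]
  refine tendsto_of_tendsto_of_tendsto_of_le_of_le' tendsto_const_nhds hlim ?_ ?_ <;>
    filter_upwards [self_mem_nhdsWithin] with s (hs : t < s) <;> rw [slope_def_field]
  · rw [le_div_iff₀ (sub_pos.2 hs)]
    linarith [rightLim_subgradient s]
  · rw [div_le_iff₀ (sub_pos.2 hs)]
    linarith [hk s t]

/-- The hypotheses say that `m s` is a subgradient of both `log f` and `log g` at `s`, up to a
multiplication that keeps the inequalities affine in `t`. -/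
theorem div_eq_div_of_common_log_subgradient (hf : Continuous f) (hg : Continuous g)
    (hg0 : ∀ t, g t ≠ 0) (hfm : ∀ s t, f s * (1 + m s * (t - s)) ≤ f t)
    (hgm : ∀ s t, g s * (1 + m s * (t - s)) ≤ g t) (a b : ℝ) :
    f a / g a = f b / g b := by
  have hfk (s t : ℝ) : f s + f s * m s * (t - s) ≤ f t := by linarith [hfm s t]
  have hgk (s t : ℝ) : g s + g s * m s * (t - s) ≤ g t := by linarith [hgm s t]
  have hderiv (t : ℝ) : HasDerivWithinAt (fun t => f t / g t) 0 (Ici t) t := by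
    have hf_lim := (monotone_of_subgradient hfk).tendsto_rightLim t
    have hg_lim := (monotone_of_subgradient hgk).tendsto_rightLim t
    have hcross :
        rightLim (fun s => f s * m s) t * g t = f t * rightLim (fun s => g s * m s) t := by
      refine tendsto_nhds_unique (hf_lim.mul hg.continuousWithinAt) ?_
      have hf_cont : Tendsto f (𝓝[>] t) (𝓝 (f t)) := hf.continuousWithinAt
      exact (hf_cont.mul hg_lim).congr fun s => by ring
    have := (hasDerivWithinAt_Ici_rightLim_of_subgradient hf hfk t).fun_div
      (hasDerivWithinAt_Ici_rightLim_of_subgradient hg hgk t) (hg0 t)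
    rwa [hcross, sub_self, zero_div] at this
  wlog hab : a ≤ b generalizing a b
  · exact (this b a (le_of_not_ge hab)).symm
  exact (constant_of_has_deriv_right_zero (hf.div hg hg0).continuousOn (fun t _ => hderiv t)
    b (right_mem_Icc.2 hab)).symm

end Subgradient

section Parking

open scoped Pointwise

variable {E : Type*} [AddCommGroup E]

/-- `C` is parkable in `B` if some translate of `C` contains `0` and is contained in `B`. -/
def Parkable (C B : Set E) : Prop :=
  ∃ v : E, 0 ∈ (fun x => x + v) '' C ∧ (fun x => x + v) '' C ⊆ B

theorem Parkable.zero_mem {C B : Set E} (h : Parkable C B) : 0 ∈ B :=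
  h.elim fun _ hv => hv.2 hv.1

variable [Module ℝ E] {B : Set E}

/-- Every chord of `B` is parkable in `B`: a chord with difference vector `d` has the translates
`[(t - 1) • d, t • d]`, `t ∈ [0, 1]`, as its translates that contain `0`. For convex `B` only their
endpoints have to be tested for membership in `B`. -/
def HasParkableChords (B : Set E) : Prop :=
  ∀ d ∈ B - B, ∃ t ∈ Icc (0 : ℝ) 1, t • d ∈ B ∧ (t - 1) • d ∈ B

theorem hasParkableChords_of_parkable_lines (hB : Convex ℝ B) (h0 : 0 ∈ B)
    (hpark : ∀ p d : E, d ≠ 0 → ({x | ∃ t : ℝ, x = p + t • d} ∩ B).Nonempty →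
      Parkable ({x | ∃ t : ℝ, x = p + t • d} ∩ B) B) :
    HasParkableChords B := by
  rintro _ ⟨z, hz, w, hw, rfl⟩
  rcases eq_or_ne z w with rfl | hzw
  · exact ⟨0, by simp, by simpa, by simpa⟩
  set d := z - w with hd
  have hw_line : w ∈ {x | ∃ t : ℝ, x = w + t • d} ∩ B := ⟨⟨0, by simp⟩, hw⟩
  have hz_line : z ∈ {x | ∃ t : ℝ, x = w + t • d} ∩ B := ⟨⟨1, by simp [hd]⟩, hz⟩
  obtain ⟨v, ⟨y, ⟨⟨r, hr⟩, -⟩, hyv⟩, hsub⟩ := hpark w d (sub_ne_zero.2 hzw) ⟨w, hw_line⟩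
  have hv : v = -(w + r • d) := hr ▸ eq_neg_of_add_eq_zero_right hyv
  have hI : OrdConnected {t : ℝ | t • d ∈ B} :=
    (hB.linear_preimage (LinearMap.toSpanSingleton ℝ E d)).ordConnected
  have hw_mem : -r ∈ {t : ℝ | t • d ∈ B} := by
    have : w + v = -r • d := by rw [hv]; module
    simpa only [mem_ofPred_eq, ← this] using hsub ⟨w, hw_line, rfl⟩
  have hz_mem : 1 - r ∈ {t : ℝ | t • d ∈ B} := by
    have : z + v = (1 - r) • d := by rw [hv, hd]; module
    simpa only [mem_ofPred_eq, ← this] using hsub ⟨z, hz_line, rfl⟩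
  have h0_mem : 0 ∈ {t : ℝ | t • d ∈ B} := by simpa using h0
  rcases lt_or_ge r 0 with hr0 | hr0
  · exact ⟨1, by simp, hI.out h0_mem hz_mem (by grind), by simpa using h0⟩
  rcases lt_or_ge 1 r with hr1 | hr1
  · exact ⟨0, by simp, by simpa using h0, hI.out hw_mem h0_mem (by grind)⟩
  · exact ⟨1 - r, by grind, hz_mem, by simpa using hw_mem⟩

namespace HasParkableChords

theorem zero_mem (h : HasParkableChords B) (hB : B.Nonempty) : 0 ∈ B := by
  obtain ⟨b, hb⟩ := hB
  obtain ⟨t, -, ht, -⟩ := h 0 ⟨b, hb, b, hb, sub_self b⟩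
  simpa using ht

theorem le_inv_gauge_add_inv_gauge_neg (h : HasParkableChords B) {x : E} (hx : 0 < gauge B x)
    (hx' : 0 < gauge B (-x)) {s : ℝ} (hs : 0 ≤ s) (hsx : s • x ∈ B - B) :
    s ≤ (gauge B x)⁻¹ + (gauge B (-x))⁻¹ := by
  obtain ⟨t, ⟨ht0, ht1⟩, hpos, hneg⟩ := h _ hsx
  have hforward : t * s ≤ (gauge B x)⁻¹ := by
    have := gauge_le_one_of_mem hpos
    rw [smul_smul, gauge_smul_of_nonneg (mul_nonneg ht0 hs), smul_eq_mul] at this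
    rwa [← one_div, le_div_iff₀ hx]
  have hbackward : (1 - t) * s ≤ (gauge B (-x))⁻¹ := by
    have := gauge_le_one_of_mem hneg
    rw [show (t - 1) • s • x = ((1 - t) * s) • (-x) by module,
      gauge_smul_of_nonneg (mul_nonneg (sub_nonneg.2 ht1) hs), smul_eq_mul] at this
    rwa [← one_div, le_div_iff₀ hx']
  linarith

end HasParkableChords

end Parking

theorem exists_ne_zero_apply_eq_zero {K V : Type*} [Field K] [AddCommGroup V] [Module K V]
    (hrank : 1 < Module.rank K V) (f : V →ₗ[K] K) : ∃ e : V, e ≠ 0 ∧ f e = 0 := by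
  have hker : LinearMap.ker f ≠ ⊥ := fun hbot => by
    have hle := LinearMap.lift_rank_le_of_injective f (LinearMap.ker_eq_bot.1 hbot)
    rw [Module.rank_self, Cardinal.lift_one, Cardinal.lift_le_one_iff] at hle
    exact hle.not_gt hrank
  obtain ⟨e, he, he0⟩ := Submodule.exists_mem_ne_zero_of_ne_bot hker
  exact ⟨e, he0, he⟩

section Gauge

variable {E : Type*} [AddCommGroup E] [Module ℝ E] {B : Set E}

theorem le_gauge_of_forall_mem_le_one (hB : Absorbent ℝ B) (f : E →ₗ[ℝ] ℝ)
    (hf : ∀ y ∈ B, f y ≤ 1) (z : E) : f z ≤ gauge B z := by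
  refine le_of_forall_gt_imp_ge_of_dense fun r hr => ?_
  obtain ⟨b, hb, hbr, y, hy, rfl⟩ := exists_lt_of_gauge_lt hB hr
  calc f (b • y) = b * f y := by rw [map_smul, smul_eq_mul]
    _ ≤ b * 1 := by gcongr; exact hf y hy
    _ ≤ r := by linarith

variable [TopologicalSpace E] [IsTopologicalAddGroup E] [ContinuousSMul ℝ E]

theorem gauge_le_one_iff_mem_of_isClosed (hconv : Convex ℝ B) (hclosed : IsClosed B)
    (h0 : B ∈ 𝓝 0) {x : E} : gauge B x ≤ 1 ↔ x ∈ B := by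
  rw [gauge_le_one_iff_mem_closure hconv h0, hclosed.closure_eq]

theorem inv_gauge_smul_mem (hconv : Convex ℝ B) (hclosed : IsClosed B) (h0 : B ∈ 𝓝 0) (x : E) :
    (gauge B x)⁻¹ • x ∈ B := by
  rw [← gauge_le_one_iff_mem_of_isClosed hconv hclosed h0,
    gauge_smul_of_nonneg (inv_nonneg.2 (gauge_nonneg x)), smul_eq_mul]
  exact inv_mul_le_one

end Gauge

section Topology

open scoped Pointwise

variable {E : Type*} [AddCommGroup E] [Module ℝ E] [TopologicalSpace E]

theorem eq_zero_of_pow_smul_mem [T2Space E] {B : Set E} (hB : Bornology.IsVonNBounded ℝ B)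
    {c : ℝ} (hc : 1 < c) {v : E} (hv : ∀ n : ℕ, c ^ n • v ∈ B) : v = 0 := by
  have hlim := hB.smul_tendsto_zero (.of_forall hv)
    (tendsto_inv_atTop_zero.comp (tendsto_pow_atTop_atTop_of_one_lt hc))
  refine tendsto_nhds_unique (tendsto_const_nhds.congr fun n => ?_) hlim
  simp [inv_smul_smul₀ (pow_ne_zero n (zero_lt_one.trans hc).ne')]

variable [IsTopologicalAddGroup E] [ContinuousSMul ℝ E] {B : Set E}

theorem exists_pos_add_smul_mem_sub_smul_mem {c : E} (hc : B ∈ 𝓝 c) (e : E) :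
    ∃ τ : ℝ, 0 < τ ∧ c + τ • e ∈ B ∧ c - τ • e ∈ B := by
  have hadd : Tendsto (fun τ : ℝ => c + τ • e) (𝓝 0) (𝓝 c) :=
    Continuous.tendsto' (by fun_prop) _ _ (by simp)
  have hsub : Tendsto (fun τ : ℝ => c - τ • e) (𝓝 0) (𝓝 c) :=
    Continuous.tendsto' (by fun_prop) _ _ (by simp)
  have hnear := (hadd.eventually_mem hc).and (hsub.eventually_mem hc)
  have hpos : ∀ᶠ τ : ℝ in 𝓝[>] 0, 0 < τ := eventually_mem_nhdsWithin
  exact (hpos.and (hnear.filter_mono nhdsWithin_le_nhds)).exists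

theorem apply_lt_of_mem_interior {f : StrongDual ℝ E} (hf : f ≠ 0) {c : ℝ}
    (hc : ∀ y ∈ B, f y ≤ c) {x : E} (hx : x ∈ interior B) : f x < c := by
  have hopen : IsOpen (f '' interior B) := f.isOpenMap_of_ne_zero hf _ isOpen_interior
  have hsub : f '' interior B ⊆ Iic c := image_subset_iff.2 fun y hy => hc y (interior_subset hy)
  have := hopen.subset_interior_iff.2 hsub (mem_image_of_mem f hx)
  rwa [interior_Iic] at this

namespace HasParkableChords

theorem sub_mem_of_apply_le (h : HasParkableChords B) (hconv : Convex ℝ B) (hclosed : IsClosed B)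
    {f : StrongDual ℝ E} (hf : ∀ y ∈ B, f y ≤ 0) {c : E} (hc : c ∈ B) (hfc : f c < 0)
    {z w : E} (hz : z ∈ B) (hw : w ∈ B) (hzw : f z ≤ f w) : z - w ∈ B := by
  have of_lt {z w : E} (hz : z ∈ B) (hw : w ∈ B) (hlt : f z < f w) : z - w ∈ B := by
    obtain ⟨t, ⟨-, ht1⟩, ht, ht'⟩ := h _ (sub_mem_sub hz hw)
    have hf_le := hf _ ht'
    rw [map_smul, map_sub, smul_eq_mul] at hf_le
    obtain rfl : t = 1 := ht1.antisymm (by nlinarith)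
    simpa using ht
  have hlim : Tendsto (fun s : ℝ => ((1 - s) • z + s • c) - (1 - s) • w) (𝓝[>] 0) (𝓝 (z - w)) := by
    have hcont : Continuous (fun s : ℝ => ((1 - s) • z + s • c) - (1 - s) • w) := by fun_prop
    exact (hcont.tendsto' 0 _ (by simp)).mono_left nhdsWithin_le_nhds
  refine hclosed.mem_of_tendsto hlim ?_
  filter_upwards [Ioc_mem_nhdsGT (zero_lt_one (α := ℝ))] with s ⟨hs0, hs1⟩
  refine of_lt (hconv hz hc (sub_nonneg.2 hs1) hs0.le (sub_add_cancel 1 s))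
    (hconv.smul_mem_of_zero_mem (h.zero_mem ⟨c, hc⟩) hw ⟨sub_nonneg.2 hs1, by linarith⟩) ?_
  simp only [map_add, map_smul, smul_eq_mul]
  nlinarith

/-- Otherwise a supporting hyperplane at `0` would contain a nonzero vector of `B`, and the
intersection of `B` with that hyperplane would be closed under doubling. -/
theorem zero_mem_interior [T2Space E] (h : HasParkableChords B) (hrank : 1 < Module.rank ℝ E)
    (hconv : Convex ℝ B) (hclosed : IsClosed B) (hbdd : Bornology.IsVonNBounded ℝ B)
    (hint : (interior B).Nonempty) : 0 ∈ interior B := by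
  by_contra h0
  obtain ⟨f, hf0, hf⟩ := geometric_hahn_banach_of_nonempty_interior_point hconv h0 hint
  rw [map_zero] at hf
  obtain ⟨c, hc⟩ := hint
  have sub_mem {z w : E} (hz : z ∈ B) (hw : w ∈ B) (hzw : f z ≤ f w) : z - w ∈ B :=
    h.sub_mem_of_apply_le hconv hclosed hf (interior_subset hc) (apply_lt_of_mem_interior hf0 hf hc)
      hz hw hzw
  have h0B : 0 ∈ B := h.zero_mem ⟨c, interior_subset hc⟩
  obtain ⟨e, he0, hfe⟩ := exists_ne_zero_apply_eq_zero hrank f.toLinearMap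
  replace hfe : f e = 0 := hfe
  obtain ⟨τ, hτ, hadd, hsub⟩ :=
    exists_pos_add_smul_mem_sub_smul_mem (mem_interior_iff_mem_nhds.1 hc) e
  set v := (c + τ • e) - (c - τ • e) with hv
  have hv_smul : v = (2 * τ) • e := by rw [hv]; module
  have hfv : f v = 0 := by rw [hv_smul, map_smul, hfe, smul_zero]
  have hpow (n : ℕ) : (2 : ℝ) ^ n • v ∈ B := by
    induction n with
    | zero =>
      rw [pow_zero, one_smul]
      exact sub_mem hadd hsub (by simp [hfe])
    | succ n ih =>
      have hneg := sub_mem h0B ih (by simp [hfv])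
      have hdouble := sub_mem ih hneg (by simp [hfv])
      rwa [show (2 : ℝ) ^ n • v - (0 - (2 : ℝ) ^ n • v) = (2 : ℝ) ^ (n + 1) • v by
        rw [pow_succ]; module] at hdouble
  have hv0 := hv_smul.symm.trans (eq_zero_of_pow_smul_mem hbdd one_lt_two hpow)
  exact smul_ne_zero (mul_pos two_pos hτ).ne' he0 hv0

theorem exists_forall_sub_le (h : HasParkableChords B) (hconv : Convex ℝ B) (h0 : B ∈ 𝓝 0)
    {x : E} (hx : 0 < gauge B x) (hx' : 0 < gauge B (-x)) :
    ∃ f : StrongDual ℝ E, 0 < f x ∧ ∀ z ∈ B, ∀ w ∈ B,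
      f z - f w ≤ ((gauge B x)⁻¹ + (gauge B (-x))⁻¹) * f x := by
  set c := (gauge B x)⁻¹ + (gauge B (-x))⁻¹
  have hc : 0 < c := by positivity
  have hD : B - B ∈ 𝓝 0 :=
    mem_of_superset h0 fun z hz => ⟨z, hz, 0, mem_of_mem_nhds h0, sub_zero z⟩
  have hD_int : 0 ∈ interior (B - B) := mem_interior_iff_mem_nhds.2 hD
  have hcx : c • x ∉ interior (B - B) := fun hmem => by
    obtain ⟨r, hr0, hr1, hr⟩ :=
      exists_lt_of_gauge_lt (absorbent_nhds_zero (𝕜 := ℝ) hD)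
        (interior_subset_gauge_lt_one _ hmem)
    rw [mem_smul_set_iff_inv_smul_mem₀ hr0.ne', smul_smul] at hr
    have hle : r⁻¹ * c ≤ c := h.le_inv_gauge_add_inv_gauge_neg hx hx' (by positivity) hr
    exact hle.not_gt (lt_mul_of_one_lt_left hc ((one_lt_inv₀ hr0).2 hr1))
  obtain ⟨f, hf0, hf⟩ :=
    geometric_hahn_banach_of_nonempty_interior_point (hconv.sub hconv) hcx ⟨0, hD_int⟩
  rw [map_smul, smul_eq_mul] at hf
  have hpos : 0 < c * f x := by simpa using apply_lt_of_mem_interior hf0 hf hD_int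
  refine ⟨f, pos_of_mul_pos_right hpos hc.le, fun z hz w hw => ?_⟩
  simpa using hf _ (sub_mem_sub hz hw)

theorem exists_common_support (h : HasParkableChords B) (hconv : Convex ℝ B)
    (hclosed : IsClosed B) (h0 : B ∈ 𝓝 0) {x : E} (hx : 0 < gauge B x) (hx' : 0 < gauge B (-x)) :
    ∃ l : StrongDual ℝ E, l x = 1 ∧ (∀ z, gauge B x * l z ≤ gauge B z) ∧
      ∀ z, gauge B (-x) * l z ≤ gauge B (-z) := by
  obtain ⟨f, hfx, hwidth⟩ := h.exists_forall_sub_le hconv h0 hx hx'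
  have habs : Absorbent ℝ B := absorbent_nhds_zero h0
  set l : StrongDual ℝ E := (f x)⁻¹ • f with hl
  have hlx : l x = 1 := inv_mul_cancel₀ hfx.ne'
  have hl_width {z w : E} (hz : z ∈ B) (hw : w ∈ B) :
      l z - l w ≤ (gauge B x)⁻¹ + (gauge B (-x))⁻¹ := by
    have : l z - l w = (f z - f w) / f x := by
      rw [← map_sub, ← map_sub, hl, smul_apply, smul_eq_mul, inv_mul_eq_div]
    rw [this, div_le_iff₀ hfx]
    exact hwidth z hz w hw
  have hl_le {y : E} (hy : y ∈ B) : l y ≤ (gauge B x)⁻¹ := by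
    have := hl_width hy (inv_gauge_smul_mem hconv hclosed h0 (-x))
    rw [map_smul, map_neg, hlx, smul_eq_mul] at this
    linarith
  have hl_ge {y : E} (hy : y ∈ B) : -l y ≤ (gauge B (-x))⁻¹ := by
    have := hl_width (inv_gauge_smul_mem hconv hclosed h0 x) hy
    rw [map_smul, hlx, smul_eq_mul] at this
    linarith
  refine ⟨l, hlx, fun z => ?_, fun z => ?_⟩
  · exact le_gauge_of_forall_mem_le_one habs (gauge B x • l.toLinearMap)
      (fun y hy => (le_inv_mul_iff₀ hx).1 (by simpa using hl_le hy)) z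
  · have hle := le_gauge_of_forall_mem_le_one habs (gauge B (-x) • -l.toLinearMap)
      (fun y hy => (le_inv_mul_iff₀ hx').1 (by simpa using hl_ge hy)) (-z)
    simpa using hle

variable [T1Space E]

theorem gauge_div_gauge_neg_eq (h : HasParkableChords B) (hconv : Convex ℝ B)
    (hclosed : IsClosed B) (hbdd : Bornology.IsVonNBounded ℝ B) (h0 : B ∈ 𝓝 0) {x y : E}
    (hxy : LinearIndependent ℝ ![x, y]) :
    gauge B x / gauge B (-x) = gauge B y / gauge B (-y) := by
  let γ : ℝ → E := fun t => x + t • (y - x)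
  have hγ_ne (t : ℝ) : γ t ≠ 0 := fun ht => by
    have hcomb : (1 - t) • x + t • y = 0 := by rw [← ht]; module
    obtain ⟨h1, h2⟩ := LinearIndependent.pair_iff.1 hxy _ _ hcomb
    linarith
  have hpos {z : E} (hz : z ≠ 0) : 0 < gauge B z := (gauge_pos (absorbent_nhds_zero h0) hbdd).2 hz
  have hpos' (t : ℝ) : 0 < gauge B (-γ t) := hpos (neg_ne_zero.2 (hγ_ne t))
  choose l hl_self hl hl_neg using fun t =>
    h.exists_common_support hconv hclosed h0 (hpos (hγ_ne t)) (hpos' t)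
  have hl_line (s t : ℝ) : l s (γ t) = 1 + l s (y - x) * (t - s) := by
    have : γ t = γ s + (t - s) • (y - x) := by simp only [γ]; module
    rw [this, map_add, hl_self, map_smul, smul_eq_mul, mul_comm]
  have hcont : Continuous (gauge B) := continuous_gauge hconv h0
  have hconst := div_eq_div_of_common_log_subgradient (f := fun t => gauge B (γ t))
    (g := fun t => gauge B (-γ t)) (m := fun t => l t (y - x)) (hcont.comp (by fun_prop))
    (hcont.comp (by fun_prop)) (fun t => (hpos' t).ne') (fun s t => hl_line s t ▸ hl s (γ t))
    (fun s t => hl_line s t ▸ hl_neg s (γ t)) 0 1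
  simpa [γ] using hconst

theorem gauge_neg_eq (h : HasParkableChords B) (hrank : 1 < Module.rank ℝ E)
    (hconv : Convex ℝ B) (hclosed : IsClosed B) (hbdd : Bornology.IsVonNBounded ℝ B)
    (h0 : B ∈ 𝓝 0) (x : E) : gauge B (-x) = gauge B x := by
  rcases eq_or_ne x 0 with rfl | hx
  · rw [neg_zero]
  obtain ⟨y, hxy⟩ := exists_linearIndependent_pair_of_one_lt_rank hrank hx
  have hxy' : LinearIndependent ℝ ![-x, y] := by simpa using hxy
  have hratio : gauge B x / gauge B (-x) = gauge B (-x) / gauge B x := by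
    rw [h.gauge_div_gauge_neg_eq hconv hclosed hbdd h0 hxy,
      ← h.gauge_div_gauge_neg_eq hconv hclosed hbdd h0 hxy', neg_neg]
  have hpos {z : E} (hz : z ≠ 0) : 0 < gauge B z := (gauge_pos (absorbent_nhds_zero h0) hbdd).2 hz
  rw [div_eq_div_iff (hpos (neg_ne_zero.2 hx)).ne' (hpos hx).ne'] at hratio
  exact ((mul_self_inj (gauge_nonneg _) (gauge_nonneg _)).1 hratio).symm

end HasParkableChords

theorem stmt_7_general [T1Space E] (hrank : 1 < Module.rank ℝ E) (hclosed : IsClosed B)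
    (hbdd : Bornology.IsVonNBounded ℝ B) (hconv : Convex ℝ B) (hint : (interior B).Nonempty)
    (hpark : ∀ p d : E, d ≠ 0 → ({x | ∃ t : ℝ, x = p + t • d} ∩ B).Nonempty →
      Parkable ({x | ∃ t : ℝ, x = p + t • d} ∩ B) B) :
    B = -B := by
  obtain ⟨c, hc⟩ := hint
  have := rank_pos_iff_nontrivial.1 (zero_lt_one.trans hrank)
  obtain ⟨e, he0⟩ := exists_ne (0 : E)
  have h0 : 0 ∈ B := (hpark c e he0 ⟨c, ⟨0, by simp⟩, interior_subset hc⟩).zero_mem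
  have hchords := hasParkableChords_of_parkable_lines hconv h0 hpark
  have hnhds : B ∈ 𝓝 0 := mem_interior_iff_mem_nhds.1 <|
    hchords.zero_mem_interior hrank hconv hclosed hbdd ⟨c, hc⟩
  ext x
  rw [Set.mem_neg, ← gauge_le_one_iff_mem_of_isClosed hconv hclosed hnhds,
    ← gauge_le_one_iff_mem_of_isClosed hconv hclosed hnhds,
    hchords.gauge_neg_eq hrank hconv hclosed hbdd hnhds]

end Topology

/-- A convex body in ℝ² all of whose nonempty line sections are parkable in it
is centrally symmetric. -/
theorem stmt_7 (B : Set (EuclideanSpace ℝ (Fin 2)))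
    (hBcomp : IsCompact B) (hBconv : Convex ℝ B)
    (hBint : (interior B).Nonempty) (hB0 : (0 : EuclideanSpace ℝ (Fin 2)) ∈ B)
    (hpark : ∀ p d : EuclideanSpace ℝ (Fin 2), d ≠ 0 →
      ({x | ∃ t : ℝ, x = p + t • d} ∩ B).Nonempty →
      ∃ w : EuclideanSpace ℝ (Fin 2),
        (0 : EuclideanSpace ℝ (Fin 2)) ∈ (fun x => x + w) '' ({x | ∃ t : ℝ, x = p + t • d} ∩ B) ∧
        (fun x => x + w) '' ({x | ∃ t : ℝ, x = p + t • d} ∩ B) ⊆ B) :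
    B = -B := by
  exact stmt_7_general (Module.one_lt_rank_of_one_lt_finrank (by simp)) hBcomp.isClosed
    (NormedSpace.isVonNBounded_of_isBounded ℝ hBcomp.isBounded) hBconv hBint hpark
end

section
/- Let S² denote the unit sphere in ℝ³ and let ψ assign to every v ∈ S² a subset ψ(v) ⊆ S² such that: (a) every ψ(v) is nonempty and closed; (b) every ψ(v) is spherically convex, meaning that for w, w' ∈ ψ(v) and t ∈ (0,1) the vector t•w + (1-t)•w' is nonzero and its normalization (t•w + (1-t)•w')/‖t•w + (1-t)•w'‖ lies in ψ(v); (c) ψ is odd, i.e. ψ(-v) = -ψ(v) for all v ∈ S²; (d) ψ is upper semicontinuous, i.e. the graph {(v, w) ∈ S² × S² : w ∈ ψ(v)} is closed. Then ψ is onto: for every w ∈ S² there exists v ∈ S² with w ∈ ψ(v). -/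
/-!
Project `ℝ³` along `w` onto a plane `ℂ` by a linear map `π`. The values `π '' ψ v` then form an odd
upper semicontinuous family of compact planar sets, and some `convexHull ℝ (π '' ψ v)` contains `0`:
otherwise each of these hulls lies strictly on one side of a line through `0`, and since the normal
vectors of such lines form locally constant choices in a convex set, a partition of unity produces a
continuous `g : S² → ℂ` with `g v` positive on `π '' ψ v`; the odd part of `g` has no zero, against
the classical Borsuk–Ulam theorem. So the line `ℝ ∙ w = ker π` meets `convexHull ℝ (ψ v)`,
which lies in the cone over `ψ v` by spherical convexity; hence `w ∈ ψ v` or `-w ∈ ψ v`, that is,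
`w ∈ ψ (-v)`.
-/

open Metric Module Set
open scoped RealInnerProductSpace

section BorsukUlam

theorem exists_continuousMap_exp_eq {X : Type*} [TopologicalSpace X] [SimplyConnectedSpace X]
    [LocallyPathConnectedSpace X] (f : C(X, ℂ)) (hf : ∀ x, f x ≠ 0) :
    ∃ L : C(X, ℂ), ∀ x, Complex.exp (L x) = f x := by
  obtain ⟨x₀⟩ : Nonempty X := inferInstance
  obtain ⟨L, ⟨-, hL⟩, -⟩ := Complex.isCoveringMapOn_exp.existsUnique_continuousMap_lifts f
    (Complex.exp_log (hf x₀)) hf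
  exact ⟨L, congrFun hL⟩

/-- The argument of an odd function advances by an odd multiple of `π` along a half circle, so `f`
winds an odd number of times around `0` and cannot be nonvanishing on the disk. -/
theorem exists_eq_zero_of_odd_on_circle (f : C(ℂ, ℂ)) (hodd : ∀ z, ‖z‖ = 1 → f (-z) = -f z) :
    ∃ z, f z = 0 := by
  by_contra! hf
  obtain ⟨L, hL⟩ := exists_continuousMap_exp_eq f hf
  have exp_jump : ∀ z ∈ sphere (0 : ℂ) 1, Complex.exp (L (-z) - L z) = -1 := fun z hz ↦ by
    rw [Complex.exp_sub, hL, hL, hodd z (mem_sphere_zero_iff_norm.1 hz), neg_div, div_self (hf z)]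
  have jump_const : L (- -1) - L (-1) = L (-1) - L 1 :=
    Complex.isCoveringMap_exp.constOn_of_comp
      (isPreconnected_sphere (by simp [Complex.rank_real_complex]) 0 1)
      (g := fun z ↦ L (-z) - L z) (by fun_prop)
      (fun z hz z' hz' ↦ Subtype.ext ((exp_jump z hz).trans (exp_jump z' hz').symm))
      (by simp) (by simp)
  have jump_eq_zero : L (-1) - L 1 = 0 := by
    rw [neg_neg, ← neg_sub] at jump_const
    exact neg_eq_self.1 jump_const
  have := exp_jump 1 (by simp)
  rw [jump_eq_zero, Complex.exp_zero] at this
  norm_num at this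

variable {E : Type*} [NormedAddCommGroup E] [NormedSpace ℝ E]

theorem exists_continuousMap_sphere_odd_on_circle (hE : 3 ≤ Module.rank ℝ E) :
    ∃ p : C(ℂ, sphere (0 : E) 1), ∀ z, ‖z‖ = 1 → p (-z) = -p z := by
  obtain ⟨b, hb⟩ := le_rank_iff.1 (show ((3 : ℕ) : Cardinal) ≤ _ from mod_cast hE)
  let q (z : ℂ) : E := z.re • b 0 + z.im • b 1 + (1 - ‖z‖) • b 2
  have q_ne_zero (z : ℂ) : q z ≠ 0 := fun hq ↦ by
    have hcoord := Fintype.linearIndependent_iff.1 hb ![z.re, z.im, 1 - ‖z‖]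
      (by simpa [Fin.sum_univ_three] using hq)
    have hz : z = 0 := Complex.ext (hcoord 0) (hcoord 1)
    simpa [hz] using hcoord 2
  have q_neg (z : ℂ) (hz : ‖z‖ = 1) : q (-z) = -q z := by
    simp only [q, Complex.neg_re, Complex.neg_im, norm_neg, hz]
    module
  refine ⟨⟨fun z ↦ ⟨‖q z‖⁻¹ • q z, by simp [norm_smul, q_ne_zero]⟩, ?_⟩, fun z hz ↦ ?_⟩
  · have hq : Continuous q := by fun_prop
    exact ((hq.norm.inv₀ fun z ↦ norm_ne_zero_iff.2 (q_ne_zero z)).smul hq).subtype_mk _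
  · ext1
    simp [q_neg z hz]

theorem exists_eq_zero_of_odd_on_sphere (hE : 3 ≤ Module.rank ℝ E) (g : C(sphere (0 : E) 1, ℂ))
    (hodd : ∀ x, g (-x) = -g x) : ∃ x, g x = 0 := by
  obtain ⟨p, hp⟩ := exists_continuousMap_sphere_odd_on_circle hE
  obtain ⟨z, hz⟩ := exists_eq_zero_of_odd_on_circle (g.comp p) fun z hz ↦ by
    simp only [ContinuousMap.comp_apply, hp z hz, hodd]
  exact ⟨p z, hz⟩

end BorsukUlam

section ConvexHull

variable {F : Type*} [AddCommGroup F] [Module ℝ F]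

theorem convexHull_range_eq_image_stdSimplex {ι : Type*} [Fintype ι] (z : ι → F) :
    convexHull ℝ (range z) = (fun a ↦ ∑ i, a i • z i) '' stdSimplex ℝ ι := by
  classical
  rw [← convexHull_rangle_single_eq_stdSimplex,
    show (fun a ↦ ∑ i, a i • z i) = Fintype.linearCombination ℝ z from rfl,
    LinearMap.image_convexHull, ← range_comp]
  congr! 2
  ext i
  simp [Fintype.linearCombination_apply_single]

theorem convexHull_eq_image_stdSimplex_prod_pi [FiniteDimensional ℝ F] (K : Set F) :
    convexHull ℝ K = (fun p : (Fin (finrank ℝ F + 1) → ℝ) × (Fin (finrank ℝ F + 1) → F) ↦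
      ∑ i, p.1 i • p.2 i) '' (stdSimplex ℝ _ ×ˢ univ.pi fun _ ↦ K) := by
  apply Subset.antisymm
  · rw [convexHull_eq_union]
    simp only [iUnion_subset_iff]
    intro t htK htind x hx
    have : Nonempty t := (convexHull_nonempty_iff.1 ⟨x, hx⟩).to_subtype
    have hcard : Fintype.card t ≤ Fintype.card (Fin (finrank ℝ F + 1)) := by
      simpa using htind.card_le_finrank_succ.trans
        (Nat.add_le_add_right (Submodule.finrank_le _) 1)
    obtain ⟨e⟩ := Function.Embedding.nonempty_of_card_le hcard
    let z (i : Fin (finrank ℝ F + 1)) : F := (Function.invFun e i : t)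
    have hz : range z = t := by
      rw [range_comp' Subtype.val (Function.invFun e),
        (Function.invFun_surjective e.injective).range_eq, image_univ, Subtype.range_coe]
    rw [← hz, convexHull_range_eq_image_stdSimplex] at hx
    obtain ⟨a, ha, rfl⟩ := hx
    exact ⟨(a, z), ⟨ha, fun i _ ↦ htK (Function.invFun e i).2⟩, rfl⟩
  · rintro _ ⟨⟨a, z⟩, ⟨ha, hz⟩, rfl⟩
    refine convexHull_mono (range_subset_iff.2 fun i ↦ hz i trivial) ?_
    rw [convexHull_range_eq_image_stdSimplex]
    exact mem_image_of_mem _ ha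

theorem isCompact_convexHull [FiniteDimensional ℝ F] [TopologicalSpace F] [ContinuousAdd F]
    [ContinuousSMul ℝ F] {K : Set F} (hK : IsCompact K) : IsCompact (convexHull ℝ K) := by
  rw [convexHull_eq_image_stdSimplex_prod_pi]
  exact ((isCompact_stdSimplex ℝ _).prod (isCompact_univ_pi fun _ ↦ hK)).image (by fun_prop)

end ConvexHull

section UpperHemicontinuous

variable {X Y Z : Type*} [TopologicalSpace X] [TopologicalSpace Y] [TopologicalSpace Z]
  {Φ : X → Set Y}

theorem upperHemicontinuous_of_isClosed_graph {K : Set Y} (hK : IsCompact K) (hΦK : ∀ x, Φ x ⊆ K)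
    (hgraph : IsClosed {p : X × Y | p.2 ∈ Φ p.1}) : UpperHemicontinuous Φ := by
  have := isCompact_iff_compactSpace.1 hK
  refine upperHemicontinuous_iff_isClosed_compl_preimage_Iic_compl.2 fun u hu ↦ ?_
  have hclosed : IsClosed {p : X × K | (p.2 : Y) ∈ Φ p.1 ∩ u} :=
    (hgraph.preimage (by fun_prop : Continuous fun p : X × K ↦ (p.1, (p.2 : Y)))).inter
      (hu.preimage (by fun_prop))
  convert isClosedMap_fst_of_compactSpace _ hclosed
  ext x
  simp only [mem_compl_iff, mem_preimage, mem_Iic, not_subset, not_not, mem_image]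
  exact ⟨fun ⟨y, hy, hyu⟩ ↦ ⟨(x, ⟨y, hΦK x hy⟩), ⟨hy, hyu⟩, rfl⟩,
    fun ⟨⟨_, y⟩, ⟨hy, hyu⟩, hx⟩ ↦ ⟨y, hx ▸ hy, hyu⟩⟩

theorem upperHemicontinuous_image (hΦ : UpperHemicontinuous Φ) {f : Y → Z} (hf : Continuous f) :
    UpperHemicontinuous fun x ↦ f '' Φ x := by
  refine .of_forall_isOpen fun x u hu hxu ↦ ?_
  simp only [image_subset_iff] at hxu ⊢
  exact hΦ.forall_isOpen x _ (hu.preimage hf) hxu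

theorem exists_continuousMap_forall_inner_pos [NormalSpace X] [ParacompactSpace X] {H : Type*}
    [NormedAddCommGroup H] [InnerProductSpace ℝ H] [FiniteDimensional ℝ H] {Φ : X → Set H}
    (hcpt : ∀ x, IsCompact (Φ x)) (husc : UpperHemicontinuous Φ)
    (hzero : ∀ x, 0 ∉ convexHull ℝ (Φ x)) : ∃ g : C(X, H), ∀ x, ∀ w ∈ Φ x, 0 < ⟪g x, w⟫ := by
  have := FiniteDimensional.complete ℝ H
  refine exists_continuous_forall_mem_convex_of_local_const
    (t := fun x ↦ {c | ∀ w ∈ Φ x, 0 < ⟪c, w⟫}) (fun x ↦ ?_) fun x ↦ ?_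
  · simp only [ofPred_forall]
    exact convex_iInter₂ fun w _ ↦ convex_halfSpace_gt ((innerₗ H).flip w).isLinear 0
  · obtain ⟨f, u, hfu, hf⟩ := geometric_hahn_banach_point_closed (convex_convexHull ℝ (Φ x))
      (isCompact_convexHull (hcpt x)).isClosed (hzero x)
    let c := (InnerProductSpace.toDual ℝ H).symm f
    have hc : Φ x ⊆ {w | 0 < ⟪c, w⟫} := fun w hw ↦ by
      simpa [c] using hfu.trans (hf w (subset_convexHull ℝ _ hw))
    have hopen : IsOpen {w : H | 0 < ⟪c, w⟫} := isOpen_lt continuous_const (by fun_prop)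
    exact ⟨c, husc.forall_isOpen x _ hopen hc⟩

end UpperHemicontinuous

theorem exists_zero_mem_convexHull_of_odd_on_sphere {E : Type*} [NormedAddCommGroup E]
    [NormedSpace ℝ E] (hE : 3 ≤ Module.rank ℝ E) {Φ : sphere (0 : E) 1 → Set ℂ}
    (hne : ∀ x, (Φ x).Nonempty) (hcpt : ∀ x, IsCompact (Φ x)) (husc : UpperHemicontinuous Φ)
    (hodd : ∀ x, Φ (-x) = -Φ x) : ∃ x, 0 ∈ convexHull ℝ (Φ x) := by
  by_contra! hzero
  obtain ⟨g, hg⟩ := exists_continuousMap_forall_inner_pos hcpt husc hzero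
  let oddPart : C(sphere (0 : E) 1, ℂ) := ⟨fun x ↦ g x - g (-x), by fun_prop⟩
  obtain ⟨x, hx⟩ := exists_eq_zero_of_odd_on_sphere hE oddPart fun x ↦ by simp [oddPart]
  obtain ⟨w, hw⟩ := hne x
  have hpos : 0 < ⟪g x, w⟫ := hg x w hw
  have hneg : 0 < ⟪g (-x), -w⟫ := hg (-x) (-w) (by simpa [hodd x] using hw)
  rw [← sub_eq_zero.1 (show g x - g (-x) = 0 from hx), inner_neg_right] at hneg
  linarith

section SphericallyConvex

open scoped Pointwise

variable {F : Type*} [NormedAddCommGroup F] [NormedSpace ℝ F] {K : Set F}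

/-- Spherical (geodesic) convexity of a subset of the unit sphere: the open segment between any two
points of `K` avoids the origin and projects radially into `K`. -/
def IsSphericallyConvex (K : Set F) : Prop :=
  ∀ w ∈ K, ∀ w' ∈ K, ∀ t : ℝ, 0 < t → t < 1 →
    t • w + (1 - t) • w' ≠ 0 ∧ ‖t • w + (1 - t) • w'‖⁻¹ • (t • w + (1 - t) • w') ∈ K

theorem IsSphericallyConvex.convex_Ioi_smul (hK : IsSphericallyConvex K) :
    Convex ℝ (Ioi (0 : ℝ) • K) := by
  rw [convex_iff_forall_pos]
  rintro _ ⟨r, hr : 0 < r, w, hw, rfl⟩ _ ⟨r', hr' : 0 < r', w', hw', rfl⟩ a b ha hb -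
  set s := a * r + b * r'
  have hs : 0 < s := by positivity
  have ht : a * r / s < 1 := (div_lt_one hs).2 (lt_add_of_pos_right _ (by positivity))
  obtain ⟨hv, hvK⟩ := hK w hw w' hw' (a * r / s) (by positivity) ht
  set v := (a * r / s) • w + (1 - a * r / s) • w' with hv_def
  have hcomb : s • v = a • r • w + b • r' • w' := by
    simp only [hv_def, smul_add, smul_smul, mul_sub, mul_div_cancel₀ _ hs.ne', s]
    module
  refine ⟨s * ‖v‖, mul_pos hs (norm_pos_iff.2 hv), _, hvK, ?_⟩
  simpa [mul_smul, smul_inv_smul₀ (norm_ne_zero_iff.2 hv)] using hcomb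

theorem IsSphericallyConvex.convexHull_subset (hK : IsSphericallyConvex K) :
    convexHull ℝ K ⊆ Ioi (0 : ℝ) • K :=
  convexHull_min (fun w hw ↦ ⟨1, mem_Ioi.2 one_pos, w, hw, one_smul ℝ w⟩) hK.convex_Ioi_smul

theorem eq_or_eq_neg_of_mem_span_singleton {u w : F} (hu : ‖u‖ = 1) (hw : ‖w‖ = 1)
    (h : u ∈ ℝ ∙ w) : u = w ∨ u = -w := by
  obtain ⟨c, rfl⟩ := Submodule.mem_span_singleton.1 h
  have hc : |c| = 1 := by simpa [norm_smul, hw] using hu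
  rcases eq_or_eq_neg_of_abs_eq hc with rfl | rfl <;> simp

end SphericallyConvex

theorem exists_linearMap_ker_eq_span_singleton {𝕜 F G : Type*} [Field 𝕜] [AddCommGroup F]
    [Module 𝕜 F] [AddCommGroup G] [Module 𝕜 G] [FiniteDimensional 𝕜 F] [FiniteDimensional 𝕜 G]
    (hFG : finrank 𝕜 F = finrank 𝕜 G + 1) {w : F} (hw : w ≠ 0) :
    ∃ π : F →ₗ[𝕜] G, LinearMap.ker π = 𝕜 ∙ w := by
  have hquot : finrank 𝕜 (F ⧸ 𝕜 ∙ w) = finrank 𝕜 G := by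
    have := (𝕜 ∙ w).finrank_quotient_add_finrank
    rw [finrank_span_singleton hw] at this
    omega
  exact ⟨(LinearEquiv.ofFinrankEq _ _ hquot).toLinearMap ∘ₗ (𝕜 ∙ w).mkQ, by
    rw [LinearEquiv.ker_comp, Submodule.ker_mkQ]⟩

theorem stmt_13_general {E F : Type*} [NormedAddCommGroup E] [NormedSpace ℝ E]
    [NormedAddCommGroup F] [NormedSpace ℝ F] (hE : 3 ≤ Module.rank ℝ E) (hF : finrank ℝ F = 3)
    (ψ : E → Set F) (hsub : ∀ v, ‖v‖ = 1 → ψ v ⊆ {w | ‖w‖ = 1})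
    (hne : ∀ v, ‖v‖ = 1 → (ψ v).Nonempty) (hconv : ∀ v, ‖v‖ = 1 → IsSphericallyConvex (ψ v))
    (hodd : ∀ v, ‖v‖ = 1 → ψ (-v) = -ψ v)
    (husc : IsClosed {p : E × F | ‖p.1‖ = 1 ∧ p.2 ∈ ψ p.1}) (w : F) (hw : ‖w‖ = 1) :
    ∃ v, ‖v‖ = 1 ∧ w ∈ ψ v := by
  have : FiniteDimensional ℝ F := .of_finrank_pos (by omega)
  have hunit (x : sphere (0 : E) 1) : ‖(x : E)‖ = 1 := norm_eq_of_mem_sphere x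
  have hgraph : IsClosed {p : sphere (0 : E) 1 × F | p.2 ∈ ψ p.1} := by
    simpa [hunit] using husc.preimage
      (by fun_prop : Continuous fun p : sphere (0 : E) 1 × F ↦ ((p.1 : E), p.2))
  have hsphere (x : sphere (0 : E) 1) : ψ x ⊆ sphere 0 1 := fun w hw ↦ by
    simpa using hsub x (hunit x) hw
  have hcpt (x : sphere (0 : E) 1) : IsCompact (ψ x) :=
    (isCompact_sphere 0 1).of_isClosed_subset (hgraph.preimage (.prodMk_right x)) (hsphere x)
  obtain ⟨π, hπ⟩ := exists_linearMap_ker_eq_span_singleton (𝕜 := ℝ) (G := ℂ) (w := w)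
    (by simp [hF]) (norm_ne_zero_iff.1 (by simp [hw]))
  have hπc : Continuous π := π.continuous_of_finiteDimensional
  obtain ⟨x, hx⟩ := exists_zero_mem_convexHull_of_odd_on_sphere hE (Φ := fun x ↦ π '' ψ x)
    (fun x ↦ (hne x (hunit x)).image π) (fun x ↦ (hcpt x).image hπc)
    (upperHemicontinuous_image
      (upperHemicontinuous_of_isClosed_graph (isCompact_sphere 0 1) hsphere hgraph) hπc)
    (fun x ↦ by simp [hodd x (hunit x), image_neg_of_apply_neg_eq_neg])
  rw [← π.image_convexHull] at hx
  obtain ⟨y, hy, hπy⟩ := hx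
  obtain ⟨r, hr, u, hu, rfl⟩ := (hconv x (hunit x)).convexHull_subset hy
  have hπu : u ∈ ℝ ∙ w := hπ ▸ (by simpa [(mem_Ioi.1 hr).ne'] using hπy)
  rcases eq_or_eq_neg_of_mem_span_singleton (hsub x (hunit x) hu) hw hπu with rfl | rfl
  · exact ⟨x, hunit x, hu⟩
  · exact ⟨-x, by simp [hunit], by simpa [hodd x (hunit x)] using hu⟩

/-- Multivalued Borsuk–Ulam: an odd, upper semicontinuous map from the unit
sphere of ℝ³ to its nonempty closed spherically convex subsets is onto. -/
theorem stmt_13 (ψ : EuclideanSpace ℝ (Fin 3) → Set (EuclideanSpace ℝ (Fin 3)))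
    (hsub : ∀ v : EuclideanSpace ℝ (Fin 3), ‖v‖ = 1 → ψ v ⊆ {w | ‖w‖ = 1})
    (hne : ∀ v : EuclideanSpace ℝ (Fin 3), ‖v‖ = 1 → (ψ v).Nonempty)
    (hcl : ∀ v : EuclideanSpace ℝ (Fin 3), ‖v‖ = 1 → IsClosed (ψ v))
    (hconv : ∀ v : EuclideanSpace ℝ (Fin 3), ‖v‖ = 1 →
      ∀ w ∈ ψ v, ∀ w' ∈ ψ v, ∀ t : ℝ, 0 < t → t < 1 →
        t • w + (1 - t) • w' ≠ 0 ∧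
        ‖t • w + (1 - t) • w'‖⁻¹ • (t • w + (1 - t) • w') ∈ ψ v)
    (hodd : ∀ v : EuclideanSpace ℝ (Fin 3), ‖v‖ = 1 → ψ (-v) = -ψ v)
    (husc : IsClosed {p : EuclideanSpace ℝ (Fin 3) × EuclideanSpace ℝ (Fin 3) |
      ‖p.1‖ = 1 ∧ p.2 ∈ ψ p.1}) :
    ∀ w : EuclideanSpace ℝ (Fin 3), ‖w‖ = 1 →
      ∃ v : EuclideanSpace ℝ (Fin 3), ‖v‖ = 1 ∧ w ∈ ψ v :=
  stmt_13_general (by simp [← finrank_eq_rank]) (by simp) ψ hsub hne hconv hodd husc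
end

section
/- Let B ⊆ ℝ³ be a centrally symmetric convex body such that every closed convex subset of B is parkable in B. Let H ⊆ ℝ³ be a two-dimensional linear subspace and let L be a one-dimensional linear subspace, spanned by a unit vector u, such that every nonempty section (H + x) ∩ B has a center of symmetry lying on L. Then the midpoint of every nonempty chord of B in direction u lies on H; that is, for every y ∈ ℝ³, if the set S = {t ∈ ℝ : y + t•u ∈ B} is nonempty, then y + ((sup S + inf S)/2)•u ∈ H. -/
/-!
Let `x ∈ B`, and let `p` be the center of the section of `B` through `x` parallel to `H`.
The reflection of `x` in `p` lies in the same section, so `x - p ∈ H`, and by the central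
symmetry of `B` its negative `x - 2p` is again in `B`. As `p` is a multiple of `u`, this says
that `B` is invariant under the oblique reflection in `H` along `u`. Hence the parameters of a
chord in direction `u ∉ H` are symmetric about the parameter at which its line meets `H`, and
that parameter is the midpoint. If `u ∈ H`, then `B ⊆ H`, and the whole chord lies in `H`.
-/

/-- The section of `B` by the translate of the subspace `H` through `x`; the translate is spelled
as the image of `H` under `h ↦ h + x`. -/
def parallelSection {𝕜 E : Type*} [Semiring 𝕜] [AddCommMonoid E] [Module 𝕜 E]
    (H : Submodule 𝕜 E) (x : E) (B : Set E) : Set E :=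
  (fun h => h + x) '' (H : Set E) ∩ B

/-- The point `p` is a center of symmetry of `C`, that is, `C = 2p - C`. The numeral is a natural
number, so that the notion needs no scalars. -/
def IsCenterOfSymmetry {E : Type*} [AddCommGroup E] (C : Set E) (p : E) : Prop :=
  C = (fun x => 2 • p - x) '' C

theorem IsCenterOfSymmetry.mapsTo {E : Type*} [AddCommGroup E] {C : Set E} {p : E}
    (hp : IsCenterOfSymmetry C p) : Set.MapsTo (fun x => 2 • p - x) C C :=
  Set.mapsTo_iff_image_subset.2 (Eq.symm hp).subset

theorem IsCenterOfSymmetry.sub_two_nsmul_mem {E : Type*} [AddCommGroup E] {B C : Set E} {p x : E}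
    (hp : IsCenterOfSymmetry C p) (hB : B = -B) (hCB : C ⊆ B) (hx : x ∈ C) : x - 2 • p ∈ B := by
  rw [hB, Set.mem_neg, neg_sub]
  exact hCB (hp.mapsTo hx)

section ParallelSection

variable {𝕜 E : Type*} [AddCommGroup E]

theorem mem_parallelSection [Ring 𝕜] [Module 𝕜 E] {H : Submodule 𝕜 E} {B : Set E} {x z : E} :
    z ∈ parallelSection H x B ↔ z - x ∈ H ∧ z ∈ B := by
  simp [parallelSection, ← sub_eq_add_neg]

theorem self_mem_parallelSection [Semiring 𝕜] [Module 𝕜 E] (H : Submodule 𝕜 E) {B : Set E} {x : E}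
    (hx : x ∈ B) : x ∈ parallelSection H x B :=
  ⟨⟨0, H.zero_mem, zero_add x⟩, hx⟩

theorem IsCenterOfSymmetry.sub_mem_of_parallelSection [DivisionRing 𝕜] [NeZero (2 : 𝕜)]
    [Module 𝕜 E] {H : Submodule 𝕜 E} {B : Set E} {x p : E}
    (hp : IsCenterOfSymmetry (parallelSection H x B) p) (hx : x ∈ B) : x - p ∈ H := by
  have hreflect : 2 • p - x - x ∈ H :=
    (mem_parallelSection.1 (hp.mapsTo (self_mem_parallelSection H hx))).1
  have htwice : 2 • p - x - x = (2 : 𝕜) • (p - x) := by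
    rw [ofNat_smul_eq_nsmul 𝕜, nsmul_sub, two_nsmul x, sub_sub]
  rw [htwice, H.smul_mem_iff two_ne_zero] at hreflect
  exact sub_mem_comm_iff.1 hreflect

theorem exists_add_smul_mem_and_reflection_mem [DivisionRing 𝕜] [NeZero (2 : 𝕜)] [Module 𝕜 E]
    {H : Submodule 𝕜 E} {B : Set E} {u y : E} {t : 𝕜} (hB : B = -B)
    (hcenter : ∃ p ∈ Submodule.span 𝕜 {u},
      IsCenterOfSymmetry (parallelSection H (y + t • u) B) p)
    (ht : y + t • u ∈ B) :
    ∃ m : 𝕜, y + m • u ∈ H ∧ y + (2 • m - t) • u ∈ B := by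
  obtain ⟨p, hpu, hp⟩ := hcenter
  obtain ⟨s, rfl⟩ := Submodule.mem_span_singleton.1 hpu
  refine ⟨t - s, ?_, ?_⟩
  · simpa only [sub_smul, add_sub_assoc] using hp.sub_mem_of_parallelSection ht
  · convert hp.sub_two_nsmul_mem hB Set.inter_subset_right
      (self_mem_parallelSection H ht) using 1
    simp only [two_nsmul, sub_smul, add_smul]
    abel

theorem eq_of_add_smul_mem_of_notMem [DivisionRing 𝕜] [Module 𝕜 E] {H : Submodule 𝕜 E} {u y : E}
    {s t : 𝕜} (hu : u ∉ H) (hs : y + s • u ∈ H) (ht : y + t • u ∈ H) : s = t := by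
  by_contra hne
  have hdiff : (s - t) • u ∈ H := by
    simpa only [add_sub_add_left_eq_sub, ← sub_smul] using H.sub_mem hs ht
  exact hu ((H.smul_mem_iff (sub_ne_zero.2 hne)).1 hdiff)

end ParallelSection

theorem csSup_add_csInf_of_mapsTo_two_nsmul_sub {α : Type*} [ConditionallyCompleteLattice α]
    [AddCommGroup α] [IsOrderedAddMonoid α] {S : Set α} {m : α} (hne : S.Nonempty)
    (habove : BddAbove S) (hm : Set.MapsTo (fun t => 2 • m - t) S S) :
    sSup S + sInf S = 2 • m := by
  have hglb : IsGLB S (2 • m - sSup S) := by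
    refine ⟨fun t ht => sub_le_comm.1 (le_csSup habove (hm ht)), fun b hb => ?_⟩
    exact le_sub_comm.1 (csSup_le hne fun t ht => le_sub_comm.1 (hb (hm ht)))
  rw [hglb.csInf_eq hne, add_sub_cancel]

theorem isBounded_setOf_add_smul_mem {E : Type*} [NormedAddCommGroup E] [NormedSpace ℝ E]
    {B : Set E} (hB : Bornology.IsBounded B) (y : E) {u : E} (hu : u ≠ 0) :
    Bornology.IsBounded {t : ℝ | y + t • u ∈ B} := by
  have hline : AntilipschitzWith (nndist y (y + u))⁻¹ (AffineMap.lineMap y (y + u) : ℝ → E) :=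
    antilipschitzWith_lineMap (left_ne_add.2 hu)
  simpa [Set.preimage, AffineMap.lineMap_apply, add_comm] using hline.isBounded_preimage hB

theorem stmt_14_general {E : Type*} [NormedAddCommGroup E] [NormedSpace ℝ E] {B : Set E}
    (hBbdd : Bornology.IsBounded B) (hBsym : B = -B) {H : Submodule ℝ E} {u : E} (hu : u ≠ 0)
    (hcenter : ∀ x, (parallelSection H x B).Nonempty →
      ∃ p ∈ Submodule.span ℝ {u}, IsCenterOfSymmetry (parallelSection H x B) p)
    {y : E} (hne : {t : ℝ | y + t • u ∈ B}.Nonempty) :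
    y + ((sSup {t : ℝ | y + t • u ∈ B} + sInf {t : ℝ | y + t • u ∈ B}) / 2) • u ∈ H := by
  have hreflect {t : ℝ} (ht : y + t • u ∈ B) :
      ∃ m : ℝ, y + m • u ∈ H ∧ y + (2 • m - t) • u ∈ B :=
    exists_add_smul_mem_and_reflection_mem hBsym
      (hcenter _ ⟨_, self_mem_parallelSection H ht⟩) ht
  obtain ⟨m, hmH, -⟩ := hreflect hne.some_mem
  by_cases huH : u ∈ H
  · have hyH : y ∈ H := (H.add_mem_iff_left (H.smul_mem m huH)).1 hmH
    exact H.add_mem hyH (H.smul_mem _ huH)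
  have hsymm : Set.MapsTo (fun t => 2 • m - t) {t : ℝ | y + t • u ∈ B}
      {t : ℝ | y + t • u ∈ B} := by
    intro t ht
    obtain ⟨m', hm'H, hm'B⟩ := hreflect ht
    rwa [eq_of_add_smul_mem_of_notMem huH hm'H hmH] at hm'B
  have hbdd : BddAbove {t : ℝ | y + t • u ∈ B} :=
    (isBounded_setOf_add_smul_mem hBbdd y hu).bddAbove
  rwa [csSup_add_csInf_of_mapsTo_two_nsmul_sub hne hbdd hsymm, two_nsmul, add_self_div_two]

/-- If for a centrally symmetric parkable convex body `B ⊆ ℝ³` the centers of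
symmetry of all nonempty sections parallel to the plane `H` lie on the line
spanned by the unit vector `u`, then the midpoint of every nonempty chord of
`B` in direction `u` lies on `H`. -/
theorem stmt_14 (B : Set (EuclideanSpace ℝ (Fin 3)))
    (hBcomp : IsCompact B) (hBconv : Convex ℝ B)
    (hBint : (interior B).Nonempty) (hB0 : (0 : EuclideanSpace ℝ (Fin 3)) ∈ B)
    (hBsym : B = -B)
    (hpark : ∀ C : Set (EuclideanSpace ℝ (Fin 3)),
      C ⊆ B → C.Nonempty → IsClosed C → Convex ℝ C →
      ∃ v : EuclideanSpace ℝ (Fin 3),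
        (0 : EuclideanSpace ℝ (Fin 3)) ∈ (fun x => x + v) '' C ∧
        (fun x => x + v) '' C ⊆ B)
    (H : Submodule ℝ (EuclideanSpace ℝ (Fin 3))) (hH : Module.finrank ℝ H = 2)
    (u : EuclideanSpace ℝ (Fin 3)) (hu : ‖u‖ = 1)
    (hL : ∀ x : EuclideanSpace ℝ (Fin 3),
      (((fun h => h + x) '' (H : Set (EuclideanSpace ℝ (Fin 3)))) ∩ B).Nonempty →
      ∃ p ∈ Submodule.span ℝ {u},
        ((fun h => h + x) '' (H : Set (EuclideanSpace ℝ (Fin 3)))) ∩ B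
          = (fun y => (2 : ℝ) • p - y) ''
              (((fun h => h + x) '' (H : Set (EuclideanSpace ℝ (Fin 3)))) ∩ B)) :
    ∀ y : EuclideanSpace ℝ (Fin 3), {t : ℝ | y + t • u ∈ B}.Nonempty →
      y + ((sSup {t : ℝ | y + t • u ∈ B} + sInf {t : ℝ | y + t • u ∈ B}) / 2) • u ∈ H := by
  have hu0 : u ≠ 0 := norm_ne_zero_iff.1 (hu ▸ one_ne_zero)
  simp only [ofNat_smul_eq_nsmul ℝ] at hL
  exact fun y => stmt_14_general hBcomp.isBounded hBsym hu0 hL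
end
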